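/- For every integer n ≥ 1 and every ε > 0, there exist finitely many complex coefficients c₁, …, c_k and nonzero real numbers s₁, …, s_k such that sup_{λ ∈ ℝ} |(1 + i λ / n)^{−n} − Σ_{j=1}^{k} c_j (λ − i s_j)⁻¹| < ε. Consequently, for all (a, b) ∈ ℝ² and all (x, y) ∈ ℝ², |(1 + (i/n)(a x + b y))^{−n} − Σ_{j=1}^{k} c_j (a x + b y − i s_j)⁻¹| < ε; that is, the approximation of (1 + (i/n)(a x + b y))^{−n} by linear combinations of basic resolvents is uniform in (a, b). -/

import Mathlib

/-!
Write `r_s(λ) = (λ - i s)⁻¹`. Since `1 + i λ / n = (i / n) (λ - i n)`, the function to approximate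
is a constant multiple of `r_n ^ n`, so it suffices that `r_n ^ n` lies in the uniform closure of
the span of the `r_s`, `s ≠ 0`. This follows by induction on the exponent once that closure is
stable under multiplication by `r_a` for `a ≥ 1` (`ResolventApprox.resolvent_mul`). As `r_a` is
bounded, only the products `r_a r_s` matter. For `s ≠ a` the resolvent identity
`r_s - r_a = i (s - a) r_s r_a` puts the product in the span itself, and `r_a ^ 2` is the uniform
limit of `r_a r_t` as `t → a`, again by the resolvent identity.
-/

/-- The basic resolvent `λ ↦ (λ - i s)⁻¹` on the real line. -/
noncomputable def basicResolvent (s : ℝ) (l : ℝ) : ℂ := ((l : ℂ) - Complex.I * s)⁻¹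

/-- The span of the basic resolvents with nonzero parameter. -/
noncomputable def resolventSpan : Submodule ℂ (ℝ → ℂ) :=
  Submodule.span ℂ (basicResolvent '' {s : ℝ | s ≠ 0})

/-- `f` is a uniform limit on `ℝ` of linear combinations of basic resolvents. -/
def ResolventApprox (f : ℝ → ℂ) : Prop :=
  ∀ ε : ℝ, 0 < ε → ∃ g ∈ resolventSpan, ∀ l, ‖f l - g l‖ < ε

lemma sub_I_mul_ne_zero {s : ℝ} (hs : s ≠ 0) (l : ℝ) : (l : ℂ) - Complex.I * s ≠ 0 := by
  intro h
  have := congrArg Complex.im h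
  simp at this
  exact hs this

lemma norm_basicResolvent_le_one {s : ℝ} (hs : 1 ≤ s) (l : ℝ) : ‖basicResolvent s l‖ ≤ 1 := by
  rw [basicResolvent, norm_inv]
  apply inv_le_one_of_one_le₀
  have h := Complex.abs_im_le_norm ((l : ℂ) - Complex.I * s)
  simp only [Complex.sub_im, Complex.ofReal_im, Complex.mul_im, Complex.I_re, Complex.I_im,
    Complex.ofReal_re] at h
  have h2 := neg_le_abs (0 - (0 * 0 + 1 * s))
  linarith

/-- The resolvent identity. -/
lemma basicResolvent_sub {s t : ℝ} (hs : s ≠ 0) (ht : t ≠ 0) (l : ℝ) :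
    basicResolvent s l - basicResolvent t l =
      Complex.I * ((s : ℂ) - t) * (basicResolvent s l * basicResolvent t l) := by
  have h1 := sub_I_mul_ne_zero hs l
  have h2 := sub_I_mul_ne_zero ht l
  unfold basicResolvent
  field_simp
  ring

lemma basicResolvent_mem {s : ℝ} (hs : s ≠ 0) : basicResolvent s ∈ resolventSpan :=
  Submodule.subset_span ⟨s, hs, rfl⟩

lemma ResolventApprox.of_mem {f : ℝ → ℂ} (hf : f ∈ resolventSpan) : ResolventApprox f :=
  fun ε hε => ⟨f, hf, fun l => by simpa using hε⟩

lemma ResolventApprox.add {f g : ℝ → ℂ} (hf : ResolventApprox f) (hg : ResolventApprox g) :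
    ResolventApprox (f + g) := by
  intro ε hε
  obtain ⟨u, hu, hfu⟩ := hf (ε / 2) (by positivity)
  obtain ⟨v, hv, hgv⟩ := hg (ε / 2) (by positivity)
  refine ⟨u + v, add_mem hu hv, fun l => ?_⟩
  have h := norm_add_le (f l - u l) (g l - v l)
  have e : (f + g) l - (u + v) l = (f l - u l) + (g l - v l) := by
    simp only [Pi.add_apply]; ring
  rw [e]
  linarith [hfu l, hgv l]

lemma ResolventApprox.smul {f : ℝ → ℂ} (c : ℂ) (hf : ResolventApprox f) :
    ResolventApprox (c • f) := by
  intro ε hε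
  obtain ⟨u, hu, hfu⟩ := hf (ε / (‖c‖ + 1)) (by positivity)
  refine ⟨c • u, Submodule.smul_mem _ _ hu, fun l => ?_⟩
  have h := hfu l
  rw [lt_div_iff₀ (by positivity)] at h
  simp only [Pi.smul_apply]
  rw [← smul_sub, norm_smul]
  nlinarith [norm_nonneg (f l - u l)]

/-- A product of two basic resolvents is a uniform limit of linear combinations, also when the two
parameters agree. -/
lemma resolventApprox_mul {a s : ℝ} (ha : 1 ≤ a) (hs : s ≠ 0) :
    ResolventApprox (basicResolvent a * basicResolvent s) := by
  have ha0 : a ≠ 0 := by positivity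
  have key : ∀ t : ℝ, t ≠ 0 → t ≠ a → basicResolvent a * basicResolvent t ∈ resolventSpan := by
    intro t ht hta
    have e : basicResolvent a * basicResolvent t =
        (Complex.I * ((a : ℂ) - t))⁻¹ • (basicResolvent a - basicResolvent t) := by
      ext l
      have hne : Complex.I * ((a : ℂ) - t) ≠ 0 :=
        mul_ne_zero Complex.I_ne_zero (sub_ne_zero.2 (by exact_mod_cast hta.symm))
      simp only [Pi.mul_apply, Pi.smul_apply, Pi.sub_apply, smul_eq_mul]
      rw [basicResolvent_sub ha0 ht, inv_mul_cancel_left₀ hne]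
    rw [e]
    exact Submodule.smul_mem _ _ (sub_mem (basicResolvent_mem ha0) (basicResolvent_mem ht))
  by_cases hsa : s = a
  · subst hsa
    intro ε hε
    -- The error is `-i (ε / 2) r_s ^ 2 r_t`, and both resolvents are bounded by `1`.
    have ht : 1 ≤ s + ε / 2 := by linarith
    refine ⟨_, key (s + ε / 2) (by positivity) (by linarith), fun l => ?_⟩
    simp only [Pi.mul_apply]
    rw [← mul_sub, basicResolvent_sub hs (by positivity)]
    have h1 := norm_basicResolvent_le_one ha l
    have h2 := norm_basicResolvent_le_one ht l
    have e : ‖Complex.I * ((s : ℂ) - (s + ε / 2 : ℝ))‖ = ε / 2 := by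
      rw [← Complex.ofReal_sub, norm_mul, Complex.norm_I, Complex.norm_real, Real.norm_eq_abs,
        sub_add_cancel_left, abs_neg, abs_of_pos (by positivity), one_mul]
    rw [norm_mul, norm_mul, e, norm_mul]
    have h3 : ‖basicResolvent s l‖ * ‖basicResolvent (s + ε / 2) l‖ ≤ 1 :=
      mul_le_one₀ h1 (norm_nonneg _) h2
    calc _ ≤ 1 * (ε / 2 * 1) := by gcongr
      _ < ε := by linarith
  · exact .of_mem (key s hs hsa)

lemma ResolventApprox.resolvent_mul {a : ℝ} (ha : 1 ≤ a) {f : ℝ → ℂ} (hf : ResolventApprox f) :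
    ResolventApprox (basicResolvent a * f) := by
  have hspan : ∀ g ∈ resolventSpan, ResolventApprox (basicResolvent a * g) := by
    intro g hg
    induction hg using Submodule.span_induction with
    | mem x hx =>
      obtain ⟨s, hs, rfl⟩ := hx
      exact resolventApprox_mul ha hs
    | zero => rw [mul_zero]; exact .of_mem (zero_mem _)
    | add x y _ _ hx hy => rw [mul_add]; exact hx.add hy
    | smul c x _ hx => rw [mul_smul_comm]; exact hx.smul c
  intro ε hε
  obtain ⟨g, hg, hfg⟩ := hf (ε / 2) (by positivity)
  obtain ⟨u, hu, hgu⟩ := hspan g hg (ε / 2) (by positivity)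
  refine ⟨u, hu, fun l => ?_⟩
  have e : (basicResolvent a * f) l - u l =
      basicResolvent a l * (f l - g l) + ((basicResolvent a * g) l - u l) := by
    simp only [Pi.mul_apply]; ring
  have h := norm_add_le (basicResolvent a l * (f l - g l)) ((basicResolvent a * g) l - u l)
  rw [norm_mul] at h
  rw [e]
  nlinarith [hfg l, hgu l, norm_basicResolvent_le_one ha l, norm_nonneg (f l - g l)]

lemma resolventApprox_pow {a : ℝ} (ha : 1 ≤ a) {m : ℕ} (hm : 1 ≤ m) :
    ResolventApprox (basicResolvent a ^ m) := by
  induction m, hm using Nat.le_induction with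
  | base => rw [pow_one]; exact .of_mem (basicResolvent_mem (by positivity))
  | succ m _ ih => rw [pow_succ']; exact ih.resolvent_mul ha

/-- For every `n ≥ 1` and `ε > 0` there are finitely many complex coefficients `c_j` and
nonzero reals `s_j` such that `sup_{λ ∈ ℝ} |(1 + i λ/n)^{-n} - Σ_j c_j (λ - i s_j)⁻¹| < ε`;
consequently `|(1 + (i/n)(a x + b y))^{-n} - Σ_j c_j (a x + b y - i s_j)⁻¹| < ε` for all
`(a, b) ∈ ℝ²` and `(x, y) ∈ ℝ²`, i.e. the approximation of `(1 + (i/n)(a x + b y))^{-n}` by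
linear combinations of basic resolvents is uniform in `(a, b)`. -/
theorem uniform_resolvent_approximation (n : ℕ) (hn : 1 ≤ n) (ε : ℝ) (hε : 0 < ε) :
    ∃ (k : ℕ) (c : Fin k → ℂ) (s : Fin k → ℝ),
      (∀ j, s j ≠ 0) ∧
      (∀ lam : ℝ,
        ‖((1 + Complex.I * lam / n) ^ n)⁻¹ -
            ∑ j, c j * ((lam : ℂ) - Complex.I * s j)⁻¹‖ < ε) ∧
      (∀ a b x y : ℝ,
        ‖((1 + (Complex.I / n) * (a * x + b * y)) ^ n)⁻¹ -
            ∑ j, c j * ((a * x + b * y : ℝ) - Complex.I * s j)⁻¹‖ < ε) := by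
  have hn' : (1 : ℝ) ≤ n := by exact_mod_cast hn
  have hn0 : (n : ℂ) ≠ 0 := by exact_mod_cast (by omega : n ≠ 0)
  obtain ⟨g, hg, happ⟩ :=
    (resolventApprox_pow hn' hn).smul (((Complex.I / n) ^ n)⁻¹) ε hε
  obtain ⟨k, c, r, hr⟩ := Submodule.mem_span_set'.1 hg
  choose s hs hsr using fun j => (r j).2
  have main : ∀ lam : ℝ, ‖((1 + Complex.I * lam / n) ^ n)⁻¹ -
      ∑ j, c j * ((lam : ℂ) - Complex.I * s j)⁻¹‖ < ε := by
    intro lam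
    have h := happ lam
    have e1 : (1 + Complex.I * lam / n) = Complex.I / n * ((lam : ℂ) - Complex.I * (n : ℝ)) := by
      push_cast
      field_simp
      linear_combination (n : ℂ) * Complex.I_sq
    have e2 : g lam = ∑ j, c j * ((lam : ℂ) - Complex.I * s j)⁻¹ := by
      rw [← hr, Finset.sum_apply]
      refine Finset.sum_congr rfl fun j _ => ?_
      rw [Pi.smul_apply, ← hsr j, smul_eq_mul, basicResolvent]
    rw [e1, ← e2, mul_pow, mul_inv, ← inv_pow (_ - _)]
    exact h
  refine ⟨k, c, s, hs, main, fun a b x y => ?_⟩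
  have h := main (a * x + b * y)
  have e : Complex.I / n * ((a : ℂ) * x + b * y) =
      Complex.I * ((a * x + b * y : ℝ) : ℂ) / n := by
    push_cast
    ring
  rw [e]
  exact h
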